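/- For all integers m ≥ 1 and n ≥ 2, χ_la(P_{2m} ∨ C_{2n−1}) = 5. -/

import Mathlib

open Finset SimpleGraph
open scoped Classical

/-- The induced vertex label (weight) of `x`: the sum of `f` over all edges incident to `x`. -/
noncomputable def vertexWeight {V : Type*} [Fintype V] (G : SimpleGraph V)
    (f : Sym2 V → ℕ) (x : V) : ℕ :=
  ∑ e ∈ G.edgeFinset.filter (fun e => x ∈ e), f e

/-- `f` is a local antimagic labeling of `G`: it restricts to a bijection from the edge set of
`G` onto `{1, …, q}` (where `q` is the number of edges), and adjacent vertices get distinct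
induced vertex labels. -/
def IsLocalAntimagic {V : Type*} [Fintype V] (G : SimpleGraph V) (f : Sym2 V → ℕ) : Prop :=
  Set.BijOn f G.edgeSet (Set.Icc 1 G.edgeSet.ncard) ∧
  ∀ ⦃x y : V⦄, G.Adj x y → vertexWeight G f x ≠ vertexWeight G f y

/-- The number of distinct induced vertex labels, `c(f)`. -/
noncomputable def colorCount {V : Type*} [Fintype V] (G : SimpleGraph V)
    (f : Sym2 V → ℕ) : ℕ :=
  (Finset.univ.image (vertexWeight G f)).card

/-- The local antimagic chromatic number `χ_la(G)`. -/
noncomputable def chiLA {V : Type*} [Fintype V] (G : SimpleGraph V) : ℕ :=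
  sInf { n | ∃ f : Sym2 V → ℕ, IsLocalAntimagic G f ∧ colorCount G f = n }

/-- The join `G ∨ H` of two vertex-disjoint graphs. -/
def joinG {α β : Type*} (G : SimpleGraph α) (H : SimpleGraph β) : SimpleGraph (α ⊕ β) :=
  SimpleGraph.fromRel (fun x y =>
    (∃ a b, x = Sum.inl a ∧ y = Sum.inl b ∧ G.Adj a b) ∨
    (∃ a b, x = Sum.inr a ∧ y = Sum.inr b ∧ H.Adj a b) ∨
    (∃ a b, x = Sum.inl a ∧ y = Sum.inr b))

/-! ### General facts -/

lemma vertexWeight_eq_sum {V : Type*} [Fintype V] (G : SimpleGraph V)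
    (f : Sym2 V → ℕ) (x : V) :
    vertexWeight G f x = ∑ y, if G.Adj x y then f s(x, y) else 0 := by
  rw [← Finset.sum_filter]
  unfold vertexWeight
  have : G.edgeFinset.filter (fun e => x ∈ e)
      = (Finset.univ.filter (fun y => G.Adj x y)).image (fun y => s(x, y)) := by
    ext e
    induction e using Sym2.ind with
    | _ a b =>
      simp only [Finset.mem_filter, SimpleGraph.mem_edgeFinset, SimpleGraph.mem_edgeSet,
        Sym2.mem_iff, Finset.mem_image, Finset.mem_univ, true_and, Sym2.eq_iff]
      constructor
      · rintro ⟨h, rfl | rfl⟩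
        · exact ⟨b, h, Or.inl ⟨rfl, rfl⟩⟩
        · exact ⟨a, h.symm, Or.inr ⟨rfl, rfl⟩⟩
      · rintro ⟨y, h, ⟨rfl, rfl⟩ | ⟨rfl, rfl⟩⟩
        · exact ⟨h, Or.inl rfl⟩
        · exact ⟨h.symm, Or.inr rfl⟩
  rw [this, Finset.sum_image]
  intro y _ z _ h
  exact Sym2.congr_right.1 h

section join
variable {α β : Type*} (G : SimpleGraph α) (H : SimpleGraph β)

lemma joinG_ll (a b : α) : (joinG G H).Adj (Sum.inl a) (Sum.inl b) ↔ G.Adj a b := by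
  simp only [joinG, SimpleGraph.fromRel_adj]
  constructor
  · rintro ⟨_, h⟩
    simp at h
    rcases h with h | h
    · exact h
    · exact h.symm
  · intro h
    exact ⟨by simpa using h.ne, Or.inl (Or.inl ⟨a, b, rfl, rfl, h⟩)⟩

lemma joinG_rr (a b : β) : (joinG G H).Adj (Sum.inr a) (Sum.inr b) ↔ H.Adj a b := by
  simp only [joinG, SimpleGraph.fromRel_adj]
  constructor
  · rintro ⟨_, h⟩
    simp at h
    rcases h with h | h
    · exact h
    · exact h.symm
  · intro h
    exact ⟨by simpa using h.ne, Or.inl (Or.inr (Or.inl ⟨a, b, rfl, rfl, h⟩))⟩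

lemma joinG_lr (a : α) (b : β) : (joinG G H).Adj (Sum.inl a) (Sum.inr b) := by
  simp [joinG, SimpleGraph.fromRel_adj]

lemma joinG_rl (a : α) (b : β) : (joinG G H).Adj (Sum.inr b) (Sum.inl a) :=
  (joinG_lr G H a b).symm
end join

lemma cyc_adj {k N : ℕ} (hk : 1 ≤ k) (hN : N = 2 * k + 1) (u v : Fin N) :
    (cycleGraph N).Adj u v ↔ u.val + 1 = v.val ∨ v.val + 1 = u.val ∨
      (u.val = 0 ∧ v.val = 2 * k) ∨ (v.val = 0 ∧ u.val = 2 * k) := by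
  have key : ∀ u v : Fin N, (u - v).val = 1 ↔ v.val + 1 = u.val ∨ (u.val = 0 ∧ v.val = 2 * k) := by
    intro u v
    have hu := u.isLt
    have hv := v.isLt
    rw [Fin.sub_def]
    simp only
    by_cases h : v.val ≤ u.val
    · have : N - v.val + u.val = (u.val - v.val) + N := by omega
      rw [this, Nat.add_mod_right, Nat.mod_eq_of_lt (by omega)]
      omega
    · rw [Nat.mod_eq_of_lt (by omega)]
      omega
  rw [cycleGraph_adj', key, key]
  omega

/-- Lower bound: any local antimagic labeling uses at least five colors. -/
lemma five_le {m N : ℕ} (hm : 1 ≤ m) (h3 : 3 ≤ N) (ho : Odd N)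
    (f : Sym2 (Fin (2 * m) ⊕ Fin N) → ℕ)
    (hf : IsLocalAntimagic (joinG (pathGraph (2 * m)) (cycleGraph N)) f) :
    5 ≤ colorCount (joinG (pathGraph (2 * m)) (cycleGraph N)) f := by
  obtain ⟨_, hadj⟩ := hf
  unfold colorCount
  set w := vertexWeight (joinG (pathGraph (2 * m)) (cycleGraph N)) f with hw
  set A : Finset ℕ := Finset.univ.image (fun a : Fin (2 * m) => w (Sum.inl a)) with hA
  set B : Finset ℕ := Finset.univ.image (fun b : Fin N => w (Sum.inr b)) with hB
  have hdisj : Disjoint A B := by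
    rw [Finset.disjoint_left]
    intro c hc hc'
    simp only [hA, hB, Finset.mem_image, Finset.mem_univ, true_and] at hc hc'
    obtain ⟨a, rfl⟩ := hc
    obtain ⟨b, h⟩ := hc'
    exact hadj (joinG_lr _ _ a b) h.symm
  have hA2 : 2 ≤ A.card := by
    have h : w (Sum.inl ⟨0, by omega⟩) ≠ w (Sum.inl ⟨1, by omega⟩) := by
      apply hadj
      rw [joinG_ll, pathGraph_adj]
      simp
    have hs : ({w (Sum.inl ⟨0, by omega⟩), w (Sum.inl ⟨1, by omega⟩)} : Finset ℕ) ⊆ A := by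
      intro c hc
      simp only [Finset.mem_insert, Finset.mem_singleton] at hc
      simp only [hA, Finset.mem_image, Finset.mem_univ, true_and]
      rcases hc with rfl | rfl
      · exact ⟨_, rfl⟩
      · exact ⟨_, rfl⟩
    calc 2 = _ := (Finset.card_pair h).symm
      _ ≤ _ := Finset.card_le_card hs
  have hB3 : 3 ≤ B.card := by
    let C : (cycleGraph N).Coloring B := SimpleGraph.Coloring.mk
      (fun b => (⟨w (Sum.inr b), by simp [hB]⟩ : B)) (by
        intro a b hab h
        have : w (Sum.inr a) = w (Sum.inr b) := congrArg Subtype.val h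
        exact hadj ((joinG_rr _ _ a b).2 hab) this)
    have h1 := C.colorable
    rw [Fintype.card_coe] at h1
    have h2 := h1.chromaticNumber_le
    rw [chromaticNumber_cycleGraph_of_odd N (by omega) ho] at h2
    exact_mod_cast h2
  have hsub : A ∪ B ⊆ Finset.univ.image w := by
    intro c hc
    simp only [hA, hB, Finset.mem_union, Finset.mem_image, Finset.mem_univ, true_and] at hc ⊢
    rcases hc with ⟨a, h⟩ | ⟨a, h⟩
    · exact ⟨_, h⟩
    · exact ⟨_, h⟩
  have := Finset.card_le_card hsub
  rw [Finset.card_union_of_disjoint hdisj] at this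
  omega

/-! ### The labels -/

/-- label of the path edge `{i, i+1}` -/
def labP (m k i : ℕ) : ℕ := if i % 2 = 0 then 2 * k + 3 * m + i / 2 else k + 2 * m + i / 2

/-- label of the cycle edge `{j, j+1}` -/
def labC (m k j : ℕ) : ℕ := if j % 2 = 0 then 1 + j / 2 else 2 * k + 3 * m - 2 - j / 2

/-- label of the cycle edge `{a, b}` -/
def labCyc (m k a b : ℕ) : ℕ :=
  if (a = 0 ∧ b = 2 * k) ∨ (b = 0 ∧ a = 2 * k) then k + 1 else labC m k (min a b)

/-- label of the edge from path vertex `i` to cycle vertex `0` -/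
def labS (m k i : ℕ) : ℕ :=
  if i = 0 then 2 * k + 4 * m else if i = 2 * m - 1 then 2 * k + 3 * m - 1
  else if i % 2 = 1 then k + 2 * m - 1 - i else k + 2 * m + 1 - i

/-- label of the edge from path vertex `i` to cycle vertex `j + 1` -/
def labM (m k i j : ℕ) : ℕ :=
  if i % 2 = 0 then
    if j % 2 = 0 then 2 * k + 4 * m + 2 + 2 * ((i / 2) * k + j / 2)
    else 2 * k + 4 * m + 4 * (m * k) - 2 * ((i / 2) * k + j / 2)
  else
    if j % 2 = 0 then 2 * k + 4 * m + 4 * (m * k) - 1 - 2 * ((i / 2) * k + j / 2)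
    else 2 * k + 4 * m + 1 + 2 * ((i / 2) * k + j / 2)

/-- label of the edge from path vertex `i` to cycle vertex `j` -/
def labB (m k i j : ℕ) : ℕ := if j = 0 then labS m k i else labM m k i (j - 1)

/-- the labeling on ordered pairs -/
def labFun (m k : ℕ) {N : ℕ} : Fin (2 * m) ⊕ Fin N → Fin (2 * m) ⊕ Fin N → ℕ
  | Sum.inl a, Sum.inl b => labP m k (min a.val b.val)
  | Sum.inr a, Sum.inr b => labCyc m k a.val b.val
  | Sum.inl a, Sum.inr b => labB m k a.val b.val
  | Sum.inr b, Sum.inl a => labB m k a.val b.val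

lemma labFun_symm (m k : ℕ) {N : ℕ} (x y : Fin (2 * m) ⊕ Fin N) :
    labFun m k x y = labFun m k y x := by
  rcases x with a | a <;> rcases y with b | b <;> simp only [labFun]
  · rw [min_comm]
  · unfold labCyc
    rw [min_comm]
    simp only [or_comm]

/-- the labeling -/
def lab (m k N : ℕ) : Sym2 (Fin (2 * m) ⊕ Fin N) → ℕ :=
  Sym2.lift ⟨labFun m k, labFun_symm m k⟩

lemma lab_mk (m k N : ℕ) (x y : Fin (2 * m) ⊕ Fin N) : lab m k N s(x, y) = labFun m k x y := rfl

/-! ### Sums -/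

lemma sum_pairs (F : ℕ → ℕ) (a : ℕ) :
    ∑ i ∈ Finset.range (2 * a), F i = ∑ I ∈ Finset.range a, (F (2 * I) + F (2 * I + 1)) := by
  induction a with
  | zero => simp
  | succ a ih =>
    rw [show 2 * (a + 1) = 2 * a + 1 + 1 by ring, Finset.sum_range_succ, Finset.sum_range_succ, ih,
      Finset.sum_range_succ]
    ring

lemma idx_lt {m k I J : ℕ} (hI : I < m) (hJ : J < k) : I * k + J < m * k := by
  calc I * k + J < I * k + k := by omega
    _ = (I + 1) * k := by ring
    _ ≤ m * k := Nat.mul_le_mul_right _ hI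

lemma row_even {m k I : ℕ} (hI : I < m) :
    ∑ j ∈ Finset.range (2 * k), labM m k (2 * I) j = k * (4 * k + 8 * m + 4 * (m * k) + 2) := by
  rw [sum_pairs, Finset.sum_congr rfl (g := fun _ => 4 * k + 8 * m + 4 * (m * k) + 2)]
  · simp
  · intro J hJ
    have := idx_lt hI (Finset.mem_range.1 hJ)
    have e1 : 2 * I / 2 = I := by omega
    have e2 : 2 * J / 2 = J := by omega
    have e3 : (2 * J + 1) / 2 = J := by omega
    have e4 : (2 * J + 1) % 2 = 1 := by omega
    simp [labM, e1, e2, e3, e4]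
    omega

lemma row_odd {m k I : ℕ} (hI : I < m) :
    ∑ j ∈ Finset.range (2 * k), labM m k (2 * I + 1) j = k * (4 * k + 8 * m + 4 * (m * k)) := by
  rw [sum_pairs, Finset.sum_congr rfl (g := fun _ => 4 * k + 8 * m + 4 * (m * k))]
  · simp
  · intro J hJ
    have := idx_lt hI (Finset.mem_range.1 hJ)
    have e1 : (2 * I + 1) / 2 = I := by omega
    have e2 : 2 * J / 2 = J := by omega
    have e3 : (2 * J + 1) / 2 = J := by omega
    have e4 : (2 * J + 1) % 2 = 1 := by omega
    have e5 : (2 * I + 1) % 2 = 1 := by omega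
    simp [labM, e1, e2, e3, e4, e5]
    omega

lemma col_sum {m k j : ℕ} (hj : j < 2 * k) :
    ∑ i ∈ Finset.range (2 * m), labM m k i j = m * (4 * k + 8 * m + 4 * (m * k) + 1) := by
  rw [sum_pairs, Finset.sum_congr rfl (g := fun _ => 4 * k + 8 * m + 4 * (m * k) + 1)]
  · simp
  · intro I hI
    have hJ : j / 2 < k := by omega
    have := idx_lt (Finset.mem_range.1 hI) hJ
    have e1 : (2 * I + 1) / 2 = I := by omega
    have e2 : 2 * I / 2 = I := by omega
    have e5 : (2 * I + 1) % 2 = 1 := by omega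
    rcases Nat.mod_two_eq_zero_or_one j with h | h <;>
    · simp [labM, e1, e2, e5, h]
      omega

lemma arith_sum (c r m : ℕ) (h : r ≤ m) :
    ∑ I ∈ Finset.range r, (c + 4 * m + 1 - 4 * I) + 2 * (r * r) = r * (c + 4 * m + 3) := by
  induction r with
  | zero => simp
  | succ r ih =>
    have := ih (by omega)
    rw [Finset.sum_range_succ]
    have e : (c + 4 * m + 1 - 4 * r) + 4 * r = c + 4 * m + 1 := by omega
    nlinarith

lemma labS_last {m k i : ℕ} (h0 : i ≠ 0) (h : i = 2 * m - 1) :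
    labS m k i = 2 * k + 3 * m - 1 := by
  unfold labS
  rw [if_neg h0, if_pos h]

lemma labS_odd {m k i : ℕ} (h0 : i ≠ 0) (h : i ≠ 2 * m - 1) (h1 : i % 2 = 1) :
    labS m k i = k + 2 * m - 1 - i := by
  unfold labS
  rw [if_neg h0, if_neg h, if_pos h1]

lemma labS_even {m k i : ℕ} (h0 : i ≠ 0) (h : i ≠ 2 * m - 1) (h1 : i % 2 = 0) :
    labS m k i = k + 2 * m + 1 - i := by
  unfold labS
  rw [if_neg h0, if_neg h, if_neg (by omega)]

lemma hub_sum {m k : ℕ} (hm : 1 ≤ m) :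
    ∑ i ∈ Finset.range (2 * m), labS m k i = 2 * (m * m) + 2 * (m * k) + 6 * m + 2 * k - 2 := by
  obtain ⟨r, rfl⟩ : ∃ r, m = r + 1 := ⟨m - 1, by omega⟩
  rw [show 2 * (r + 1) = 2 * r + 1 + 1 by ring, Finset.sum_range_succ, Finset.sum_range_succ',
    sum_pairs]
  have h := arith_sum (2 * k) r r le_rfl
  rw [Finset.sum_congr rfl (g := fun I => 2 * k + 4 * r + 1 - 4 * I)]
  · have e1 : labS (r + 1) k 0 = 2 * k + 4 * (r + 1) := by simp [labS]
    have e2 : labS (r + 1) k (2 * r + 1) = 2 * k + 3 * (r + 1) - 1 :=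
      labS_last (by omega) (by omega)
    rw [e1, e2]
    have e3 : r * (2 * k + 4 * r + 3) = 2 * (r * k) + 4 * (r * r) + 3 * r := by ring
    have e4 : (r + 1) * (r + 1) = r * r + 2 * r + 1 := by ring
    have e5 : (r + 1) * k = r * k + k := by ring
    rw [e4, e5]
    omega
  · intro I hI
    have := Finset.mem_range.1 hI
    show _ = 2 * k + 4 * r + 1 - 4 * I
    rw [labS_odd (by omega) (by omega) (by omega), labS_even (by omega) (by omega) (by omega)]
    omega

lemma nbr_sum (M i : ℕ) (hi : i < M) (F : ℕ → ℕ) :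
    (∑ a ∈ Finset.range M, if i + 1 = a ∨ a + 1 = i then F a else 0)
      = (if i = 0 then 0 else F (i - 1)) + (if i + 1 < M then F (i + 1) else 0) := by
  have : ∀ a, (if i + 1 = a ∨ a + 1 = i then F a else 0)
      = (if i + 1 = a then F a else 0) + (if i = 0 then 0 else if i - 1 = a then F a else 0) := by
    intro a
    split_ifs <;> omega
  rw [Finset.sum_congr rfl (fun a _ => this a), Finset.sum_add_distrib, Finset.sum_ite_eq]
  by_cases h : i = 0
  · simp [h]
  · have h' : i - 1 < M := by omega
    simp [h, h']
    ring

lemma path_sum {m k i : ℕ} (hi : i < 2 * m) :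
    (∑ a ∈ Finset.range (2 * m), if i + 1 = a ∨ a + 1 = i then labP m k (min i a) else 0)
      + labS m k i = if i % 2 = 0 then 4 * k + 7 * m else 4 * k + 7 * m - 2 := by
  rw [nbr_sum _ _ hi]
  have e1 : min i (i - 1) = i - 1 := by omega
  have e2 : min i (i + 1) = i := by omega
  rw [e1, e2]
  unfold labP labS
  split_ifs <;> omega

lemma cycle_sum {m k j N : ℕ} (hm : 1 ≤ m) (hk : 1 ≤ k) (hN : N = 2 * k + 1) (hj : j < N) :
    (∑ b ∈ Finset.range N, if j + 1 = b ∨ b + 1 = j ∨ (j = 0 ∧ b = 2 * k) ∨ (b = 0 ∧ j = 2 * k)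
      then labCyc m k j b else 0) =
      if j = 0 then k + 2 else if j % 2 = 1 then 2 * k + 3 * m - 1 else 2 * k + 3 * m := by
  have : ∀ b, (if j + 1 = b ∨ b + 1 = j ∨ (j = 0 ∧ b = 2 * k) ∨ (b = 0 ∧ j = 2 * k)
      then labCyc m k j b else 0)
      = (if j + 1 = b ∨ b + 1 = j then labC m k (min j b) else 0)
        + (if 2 * k = b then (if j = 0 then k + 1 else 0) else 0)
        + (if 0 = b then (if j = 2 * k then k + 1 else 0) else 0) := by
    intro b
    unfold labCyc
    split_ifs <;> omega
  rw [Finset.sum_congr rfl (fun a _ => this a), Finset.sum_add_distrib, Finset.sum_add_distrib,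
    nbr_sum _ _ hj, Finset.sum_ite_eq, Finset.sum_ite_eq]
  have e1 : min j (j - 1) = j - 1 := by omega
  have e2 : min j (j + 1) = j := by omega
  simp only [e1, e2, Finset.mem_range]
  unfold labC
  split_ifs <;> omega

/-- the prescribed weights -/
def wt (m k : ℕ) {N : ℕ} : Fin (2 * m) ⊕ Fin N → ℕ
  | Sum.inl i => if i.val % 2 = 0 then 4 * k + 7 * m + k * (4 * k + 8 * m + 4 * (m * k) + 2)
      else 4 * k + 7 * m - 2 + k * (4 * k + 8 * m + 4 * (m * k))
  | Sum.inr j => if j.val = 0 then 2 * (m * m) + 2 * (m * k) + 6 * m + 3 * k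
      else if j.val % 2 = 1 then m * (4 * k + 8 * m + 4 * (m * k) + 1) + (2 * k + 3 * m - 1)
      else m * (4 * k + 8 * m + 4 * (m * k) + 1) + (2 * k + 3 * m)

lemma weight_eq {m k N : ℕ} (hm : 1 ≤ m) (hk : 1 ≤ k) (hN : N = 2 * k + 1)
    (x : Fin (2 * m) ⊕ Fin N) :
    vertexWeight (joinG (pathGraph (2 * m)) (cycleGraph N)) (lab m k N) x = wt m k x := by
  rw [vertexWeight_eq_sum, Fintype.sum_sum_type]
  rcases x with i | j
  · simp only [joinG_ll, joinG_lr, if_true, lab_mk, labFun, pathGraph_adj]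
    have h1 := Fin.sum_univ_eq_sum_range
      (fun a => if i.val + 1 = a ∨ a + 1 = i.val then labP m k (min i.val a) else 0) (2 * m)
    have h2 := Fin.sum_univ_eq_sum_range (fun b => labB m k i.val b) N
    beta_reduce at h1 h2
    rw [h1, h2, hN, Finset.sum_range_succ']
    have h3 : labB m k i.val 0 = labS m k i.val := by simp [labB]
    have h4 : ∀ b, labB m k i.val (b + 1) = labM m k i.val b := by intro b; simp [labB]
    simp only [h3, h4]
    have h5 := path_sum (k := k) i.isLt
    have hi := i.isLt
    rcases Nat.mod_two_eq_zero_or_one i.val with h | h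
    · have h6 := row_even (m := m) (k := k) (I := i.val / 2) (by omega)
      rw [show 2 * (i.val / 2) = i.val by omega] at h6
      rw [h6]
      simp only [wt, h, if_true] at h5 ⊢
      omega
    · have h6 := row_odd (m := m) (k := k) (I := i.val / 2) (by omega)
      rw [show 2 * (i.val / 2) + 1 = i.val by omega] at h6
      rw [h6]
      simp only [wt, h, one_ne_zero, if_false] at h5 ⊢
      omega
  · simp only [joinG_rr, joinG_rl, if_true, lab_mk, labFun, cyc_adj hk hN]
    have h1 := Fin.sum_univ_eq_sum_range
      (fun b => if j.val + 1 = b ∨ b + 1 = j.val ∨ (j.val = 0 ∧ b = 2 * k) ∨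
        (b = 0 ∧ j.val = 2 * k) then labCyc m k j.val b else 0) N
    have h2 := Fin.sum_univ_eq_sum_range (fun a => labB m k a j.val) (2 * m)
    beta_reduce at h1 h2
    rw [h1, h2, cycle_sum hm hk hN j.isLt]
    have hj := j.isLt
    by_cases h : j.val = 0
    · have h4 : ∀ a, labB m k a j.val = labS m k a := by intro a; simp [labB, h]
      rw [Finset.sum_congr rfl (fun a _ => h4 a), hub_sum hm]
      simp only [wt, h, if_true]
      omega
    · have h4 : ∀ a, labB m k a j.val = labM m k a (j.val - 1) := by intro a; simp [labB, h]
      simp only [h4, wt, h, if_false]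
      rw [col_sum (by omega)]
      split_ifs <;> rfl

lemma hub_ne {m k : ℕ} (hk : 1 ≤ k) (r : ℕ) (hr : r = 0 ∨ r = 2 * k + 2) :
    2 * (m * m) + 2 * (m * k) + 6 * m + 3 * k + 2 ≠
      4 * (m * k * k) + 4 * (k * k) + 8 * (m * k) + 4 * k + 7 * m + r := by
  intro h
  -- write `2 m = a + d` with `a = 4 k² + 6 k + 1`
  rcases lt_trichotomy (2 * m) (4 * (k * k) + 6 * k + 2) with hlt | heq | hgt
  · have : 2 * m ≤ 4 * (k * k) + 6 * k + 1 := by omega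
    have h2 := Nat.mul_le_mul_left m this
    nlinarith
  · have hm : m = 2 * (k * k) + 3 * k + 1 := by omega
    have h2 : m * (2 * m) = m * (4 * (k * k) + 6 * k + 2) := by rw [heq]
    have h3 : m + 2 = 4 * (k * k) + k + r := by nlinarith
    have h4 : 4 * (k * k) + k + r = 2 * (k * k) + 3 * k + 3 := by omega
    rcases hr with rfl | rfl <;> omega
  · have : 4 * (k * k) + 6 * k + 4 ≤ 2 * m := by omega
    have h2 := Nat.mul_le_mul_left m this
    rcases hr with rfl | rfl <;> nlinarith

lemma lr_ne {m k N : ℕ} (hm : 1 ≤ m) (hk : 1 ≤ k) (a : Fin (2 * m)) (b : Fin N) :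
    wt m k (N := N) (Sum.inl a) ≠ wt m k (Sum.inr b) := by
  have e1 : k * (4 * k + 8 * m + 4 * (m * k) + 2)
      = 4 * (k * k) + 8 * (m * k) + 4 * (m * k * k) + 2 * k := by ring
  have e2 : k * (4 * k + 8 * m + 4 * (m * k))
      = 4 * (k * k) + 8 * (m * k) + 4 * (m * k * k) := by ring
  have e3 : m * (4 * k + 8 * m + 4 * (m * k) + 1)
      = 4 * (m * k) + 8 * (m * m) + 4 * (m * k * m) + m := by ring
  have h0 := hub_ne (m := m) hk 0 (Or.inl rfl)
  have h1 := hub_ne (m := m) hk _ (Or.inr rfl)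
  simp only [wt, e1, e2, e3]
  have h2 : (k < m ∧ 4 * (m * k * k) + 4 * (k * k) + 4 * (m * k) + 4 * (m * k) + 4 * k + 8 * m
        ≤ 4 * (m * k * m) + 8 * (m * m)) ∨
      (m ≤ k ∧ 4 * (m * k * m) + 8 * (m * m) ≤ 4 * (m * k * k) + 4 * (k * k) + 4 * (m * k)) := by
    rcases Nat.lt_or_ge k m with h | h
    · left
      refine ⟨h, ?_⟩
      obtain ⟨d, rfl⟩ : ∃ d, m = k + 1 + d := ⟨m - (k + 1), by omega⟩
      nlinarith [Nat.zero_le (k * k * d), Nat.zero_le (k * d * d), Nat.zero_le (k * d),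
        Nat.zero_le (d * d), Nat.zero_le (k * k * k)]
    · right
      refine ⟨h, ?_⟩
      obtain ⟨d, rfl⟩ : ∃ d, k = m + d := ⟨k - m, by omega⟩
      nlinarith [Nat.zero_le (m * m * d), Nat.zero_le (m * d * d), Nat.zero_le (m * d),
        Nat.zero_le (d * d)]
  split_ifs <;> omega

/-! ### The labeling is a bijection -/

/-- parametrisation of the edges -/
def edgeMap (m k N : ℕ) (hN : N = 2 * k + 1) :
    Fin (2 * m - 1) ⊕ Fin N ⊕ (Fin (2 * m) × Fin N) → Sym2 (Fin (2 * m) ⊕ Fin N)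
  | Sum.inl i => s(Sum.inl ⟨i.val, by omega⟩, Sum.inl ⟨i.val + 1, by omega⟩)
  | Sum.inr (Sum.inl j) => s(Sum.inr j, Sum.inr ⟨if j.val = 2 * k then 0 else j.val + 1, by
      have := j.isLt
      split_ifs <;> omega⟩)
  | Sum.inr (Sum.inr p) => s(Sum.inl p.1, Sum.inr p.2)

lemma edge_sub {m k N : ℕ} (hk : 1 ≤ k) (hN : N = 2 * k + 1) :
    (joinG (pathGraph (2 * m)) (cycleGraph N)).edgeSet ⊆ Set.range (edgeMap m k N hN) := by
  intro e
  induction e using Sym2.ind with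
  | _ x y =>
    rw [SimpleGraph.mem_edgeSet]
    intro h
    rcases x with a | a <;> rcases y with b | b
    · rw [joinG_ll, pathGraph_adj] at h
      have ha := a.isLt
      have hb := b.isLt
      rcases h with h | h
      · refine ⟨Sum.inl ⟨a.val, by omega⟩, ?_⟩
        simp only [edgeMap, h]
      · refine ⟨Sum.inl ⟨b.val, by omega⟩, ?_⟩
        simp only [edgeMap, h]
        exact Sym2.eq_swap
    · exact ⟨Sum.inr (Sum.inr (a, b)), rfl⟩
    · exact ⟨Sum.inr (Sum.inr (b, a)), Sym2.eq_swap⟩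
    · rw [joinG_rr, cyc_adj hk hN] at h
      have ha := a.isLt
      have hb := b.isLt
      have key : ∀ u v : Fin N, (u.val + 1 = v.val ∨ (v.val = 0 ∧ u.val = 2 * k)) →
          edgeMap m k N hN (Sum.inr (Sum.inl u)) = s(Sum.inr u, Sum.inr v) := by
        intro u v huv
        have hu := u.isLt
        have hv := v.isLt
        have : (⟨if u.val = 2 * k then 0 else u.val + 1, by split_ifs <;> omega⟩ : Fin N) = v := by
          apply Fin.ext
          simp only
          split_ifs <;> omega
        simp only [edgeMap, this]
      by_cases h' : a.val + 1 = b.val ∨ (b.val = 0 ∧ a.val = 2 * k)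
      · exact ⟨_, key a b h'⟩
      · exact ⟨_, (key b a (by omega)).trans Sym2.eq_swap⟩

lemma edge_card {m k N : ℕ} (hm : 1 ≤ m) (hk : 1 ≤ k) (hN : N = 2 * k + 1) :
    (joinG (pathGraph (2 * m)) (cycleGraph N)).edgeSet.ncard ≤ 4 * m + 2 * k + 4 * (m * k) := by
  refine (Set.ncard_le_ncard (edge_sub hk hN) (Set.toFinite _)).trans ?_
  rw [← Set.image_univ]
  refine (Set.ncard_image_le (Set.toFinite _)).trans ?_
  rw [Set.ncard_univ, Nat.card_eq_fintype_card]
  simp only [Fintype.card_sum, Fintype.card_prod, Fintype.card_fin]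
  have : 2 * m * N = 4 * (m * k) + 2 * m := by rw [hN]; ring
  omega

section surj
variable {m k N : ℕ}

lemma hit_path {l : ℕ} (i : ℕ) (hi : i + 1 < 2 * m) (hl : labP m k i = l) :
    l ∈ lab m k N '' (joinG (pathGraph (2 * m)) (cycleGraph N)).edgeSet := by
  refine ⟨s(Sum.inl ⟨i, by omega⟩, Sum.inl ⟨i + 1, hi⟩), ?_, ?_⟩
  · rw [SimpleGraph.mem_edgeSet, joinG_ll, pathGraph_adj]
    exact Or.inl rfl
  · rw [lab_mk]
    simpa [labFun] using hl

lemma hit_cyc {l : ℕ} (hk : 1 ≤ k) (hN : N = 2 * k + 1) (j : ℕ) (hj : j < 2 * k)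
    (hl : labC m k j = l) :
    l ∈ lab m k N '' (joinG (pathGraph (2 * m)) (cycleGraph N)).edgeSet := by
  refine ⟨s(Sum.inr ⟨j, by omega⟩, Sum.inr ⟨j + 1, by omega⟩), ?_, ?_⟩
  · rw [SimpleGraph.mem_edgeSet, joinG_rr, cyc_adj hk hN]
    exact Or.inl rfl
  · rw [lab_mk]
    simp only [labFun, labCyc]
    rw [if_neg (by omega), min_eq_left (by omega), hl]

lemma hit_cyc_last (hk : 1 ≤ k) (hN : N = 2 * k + 1) :
    k + 1 ∈ lab m k N '' (joinG (pathGraph (2 * m)) (cycleGraph N)).edgeSet := by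
  refine ⟨s(Sum.inr ⟨0, by omega⟩, Sum.inr ⟨2 * k, by omega⟩), ?_, ?_⟩
  · rw [SimpleGraph.mem_edgeSet, joinG_rr, cyc_adj hk hN]
    exact Or.inr (Or.inr (Or.inl ⟨rfl, rfl⟩))
  · rw [lab_mk]
    simp [labFun, labCyc]

lemma hit_spoke {l : ℕ} (hN : N = 2 * k + 1) (i : ℕ) (hi : i < 2 * m) (hl : labS m k i = l) :
    l ∈ lab m k N '' (joinG (pathGraph (2 * m)) (cycleGraph N)).edgeSet := by
  refine ⟨s(Sum.inl ⟨i, hi⟩, Sum.inr ⟨0, by omega⟩), ?_, ?_⟩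
  · rw [SimpleGraph.mem_edgeSet]
    exact joinG_lr _ _ _ _
  · rw [lab_mk]
    simpa [labFun, labB] using hl

lemma hit_mat {l : ℕ} (hN : N = 2 * k + 1) (i j : ℕ) (hi : i < 2 * m) (hj : j < 2 * k)
    (hl : labM m k i j = l) :
    l ∈ lab m k N '' (joinG (pathGraph (2 * m)) (cycleGraph N)).edgeSet := by
  refine ⟨s(Sum.inl ⟨i, hi⟩, Sum.inr ⟨j + 1, by omega⟩), ?_, ?_⟩
  · rw [SimpleGraph.mem_edgeSet]
    exact joinG_lr _ _ _ _
  · rw [lab_mk]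
    simpa [labFun, labB] using hl

lemma surj (hm : 1 ≤ m) (hk : 1 ≤ k) (hN : N = 2 * k + 1) :
    Set.Icc 1 (4 * m + 2 * k + 4 * (m * k)) ⊆
      lab m k N '' (joinG (pathGraph (2 * m)) (cycleGraph N)).edgeSet := by
  rintro l ⟨hl1, hl2⟩
  by_cases c1 : l ≤ k
  · refine hit_cyc hk hN (2 * (l - 1)) (by omega) ?_
    rw [labC, if_pos (by omega)]
    omega
  by_cases c2 : l = k + 1
  · rw [c2]
    exact hit_cyc_last hk hN
  by_cases c3 : l ≤ k + 2 * m - 1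
  · rcases Nat.mod_two_eq_zero_or_one (k + 2 * m + 1 - l) with h | h
    · refine hit_spoke hN (k + 2 * m + 1 - l) (by omega) ?_
      rw [labS_even (by omega) (by omega) h]
      omega
    · refine hit_spoke hN (k + 2 * m - 1 - l) (by omega) ?_
      rw [labS_odd (by omega) (by omega) (by omega)]
      omega
  by_cases c4 : l ≤ k + 3 * m - 2
  · refine hit_path (2 * (l - k - 2 * m) + 1) (by omega) ?_
    rw [labP, if_neg (by omega)]
    omega
  by_cases c5 : l ≤ 2 * k + 3 * m - 2
  · refine hit_cyc hk hN (2 * (2 * k + 3 * m - 2 - l) + 1) (by omega) ?_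
    rw [labC, if_neg (by omega)]
    omega
  by_cases c6 : l = 2 * k + 3 * m - 1
  · refine hit_spoke hN (2 * m - 1) (by omega) ?_
    rw [labS_last (by omega) rfl, c6]
  by_cases c7 : l ≤ 2 * k + 4 * m - 1
  · refine hit_path (2 * (l - 2 * k - 3 * m)) (by omega) ?_
    rw [labP, if_pos (by omega)]
    omega
  by_cases c8 : l = 2 * k + 4 * m
  · refine hit_spoke hN 0 (by omega) ?_
    rw [c8]
    simp [labS]
  -- the matrix part
  have key : ∀ t, t < m * k → ∃ I J, I < m ∧ J < k ∧ t = I * k + J := by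
    intro t ht
    refine ⟨t / k, t % k, ?_, Nat.mod_lt _ hk, ?_⟩
    · exact (Nat.div_lt_iff_lt_mul hk).2 ht
    · rw [mul_comm]
      exact (Nat.div_add_mod t k).symm
  by_cases c9 : l < 2 * k + 4 * m + 1 + 2 * (m * k)
  · obtain ⟨I, J, hI, hJ, ht⟩ := key ((l - (2 * k + 4 * m + 1)) / 2) (by omega)
    rcases Nat.mod_two_eq_zero_or_one (l - (2 * k + 4 * m + 1)) with h | h
    · refine hit_mat hN (2 * I + 1) (2 * J + 1) (by omega) (by omega) ?_
      rw [labM, if_neg (by omega), if_neg (by omega), show (2 * I + 1) / 2 = I by omega,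
        show (2 * J + 1) / 2 = J by omega]
      omega
    · refine hit_mat hN (2 * I) (2 * J) (by omega) (by omega) ?_
      rw [labM, if_pos (by omega), if_pos (by omega), show (2 * I) / 2 = I by omega,
        show (2 * J) / 2 = J by omega]
      omega
  · obtain ⟨I, J, hI, hJ, ht⟩ := key ((4 * m + 2 * k + 4 * (m * k) - l) / 2) (by omega)
    rcases Nat.mod_two_eq_zero_or_one (4 * m + 2 * k + 4 * (m * k) - l) with h | h
    · refine hit_mat hN (2 * I) (2 * J + 1) (by omega) (by omega) ?_
      rw [labM, if_pos (by omega), if_neg (by omega), show (2 * I) / 2 = I by omega,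
        show (2 * J + 1) / 2 = J by omega]
      omega
    · refine hit_mat hN (2 * I + 1) (2 * J) (by omega) (by omega) ?_
      rw [labM, if_neg (by omega), if_pos (by omega), show (2 * I + 1) / 2 = I by omega,
        show (2 * J) / 2 = J by omega]
      omega

end surj

lemma lab_bij {m k N : ℕ} (hm : 1 ≤ m) (hk : 1 ≤ k) (hN : N = 2 * k + 1) :
    Set.BijOn (lab m k N) (joinG (pathGraph (2 * m)) (cycleGraph N)).edgeSet
      (Set.Icc 1 (joinG (pathGraph (2 * m)) (cycleGraph N)).edgeSet.ncard) := by
  set E := (joinG (pathGraph (2 * m)) (cycleGraph N)).edgeSet with hE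
  set Q := 4 * m + 2 * k + 4 * (m * k) with hQ
  have h1 : E.ncard ≤ Q := edge_card hm hk hN
  have h2 : Set.Icc 1 Q ⊆ lab m k N '' E := surj hm hk hN
  have h3 : (Set.Icc 1 Q).ncard = Q := by
    rw [Set.ncard_eq_toFinset_card']
    simp
  have hfin : (lab m k N '' E).Finite := Set.toFinite _
  have h4 : (lab m k N '' E).ncard ≤ E.ncard := Set.ncard_image_le (Set.toFinite _)
  have h5 : Set.Icc 1 Q = lab m k N '' E :=
    Set.eq_of_subset_of_ncard_le h2 (by omega) hfin
  have h6 : E.ncard = Q := by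
    rw [← h5] at h4
    omega
  have h7 : Set.InjOn (lab m k N) E :=
    Set.injOn_of_ncard_image_eq (by rw [← h5]; omega) (Set.toFinite _)
  rw [h6, h5]
  exact h7.bijOn_image

lemma lab_antimagic {m k N : ℕ} (hm : 1 ≤ m) (hk : 1 ≤ k) (hN : N = 2 * k + 1) :
    IsLocalAntimagic (joinG (pathGraph (2 * m)) (cycleGraph N)) (lab m k N) := by
  refine ⟨lab_bij hm hk hN, ?_⟩
  intro x y h
  rw [weight_eq hm hk hN, weight_eq hm hk hN]
  rcases x with a | a <;> rcases y with b | b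
  · rw [joinG_ll, pathGraph_adj] at h
    have e1 : k * (4 * k + 8 * m + 4 * (m * k) + 2)
        = k * (4 * k + 8 * m + 4 * (m * k)) + 2 * k := by ring
    simp only [wt, e1]
    split_ifs <;> omega
  · exact lr_ne hm hk a b
  · exact (lr_ne hm hk b a).symm
  · rw [joinG_rr, cyc_adj hk hN] at h
    have e3 : m * (4 * k + 8 * m + 4 * (m * k) + 1)
        = 4 * (m * k) + 8 * (m * m) + 4 * (m * k * m) + m := by ring
    have e4 : k ≤ m * k := Nat.le_mul_of_pos_left k hm
    have e5 : m ≤ m * m := Nat.le_mul_of_pos_left m hm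
    simp only [wt, e3]
    split_ifs <;> omega

lemma lab_count {m k N : ℕ} (hm : 1 ≤ m) (hk : 1 ≤ k) (hN : N = 2 * k + 1) :
    colorCount (joinG (pathGraph (2 * m)) (cycleGraph N)) (lab m k N) ≤ 5 := by
  unfold colorCount
  refine (Finset.card_le_card (t := {4 * k + 7 * m + k * (4 * k + 8 * m + 4 * (m * k) + 2),
    4 * k + 7 * m - 2 + k * (4 * k + 8 * m + 4 * (m * k)),
    2 * (m * m) + 2 * (m * k) + 6 * m + 3 * k,
    m * (4 * k + 8 * m + 4 * (m * k) + 1) + (2 * k + 3 * m - 1),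
    m * (4 * k + 8 * m + 4 * (m * k) + 1) + (2 * k + 3 * m)}) ?_).trans Finset.card_le_five
  intro c hc
  rw [Finset.mem_image] at hc
  obtain ⟨x, -, rfl⟩ := hc
  rw [weight_eq hm hk hN]
  simp only [Finset.mem_insert, Finset.mem_singleton]
  rcases x with a | a
  · simp only [wt]
    split_ifs
    · exact Or.inl rfl
    · exact Or.inr (Or.inl rfl)
  · simp only [wt]
    split_ifs
    · exact Or.inr (Or.inr (Or.inl rfl))
    · exact Or.inr (Or.inr (Or.inr (Or.inl rfl)))
    · exact Or.inr (Or.inr (Or.inr (Or.inr rfl)))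

lemma chiLA_aux {m k N : ℕ} (hm : 1 ≤ m) (hk : 1 ≤ k) (hN : N = 2 * k + 1) :
    chiLA (joinG (pathGraph (2 * m)) (cycleGraph N)) = 5 := by
  have hlow := fun f => five_le (N := N) hm (by omega) ⟨k, hN⟩ f
  have hmem : 5 ∈ { n | ∃ f : Sym2 (Fin (2 * m) ⊕ Fin N) → ℕ,
      IsLocalAntimagic (joinG (pathGraph (2 * m)) (cycleGraph N)) f ∧
      colorCount (joinG (pathGraph (2 * m)) (cycleGraph N)) f = n } :=
    ⟨lab m k N, lab_antimagic hm hk hN,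
      le_antisymm (lab_count hm hk hN) (hlow _ (lab_antimagic hm hk hN))⟩
  unfold chiLA
  apply le_antisymm
  · exact Nat.sInf_le hmem
  · obtain ⟨f, hf, hc⟩ := Nat.sInf_mem ⟨5, hmem⟩
    rw [← hc]
    exact hlow f hf

/-- Theorem: For all integers `m ≥ 1` and `n ≥ 2`, `χ_la(P_{2m} ∨ C_{2n−1}) = 5`. -/
theorem chiLA_path_join_oddCycle (m n : ℕ) (hm : 1 ≤ m) (hn : 2 ≤ n) :
    chiLA (joinG (pathGraph (2 * m)) (cycleGraph (2 * n - 1))) = 5 := by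
  exact chiLA_aux (k := n - 1) hm (by omega) (by omega)
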